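/- Assume A satisfies Assumption 3.1. Pick a nonincreasing sequence of positive numbers h_j (j ≥ 0), run the greedy boosting algorithm with sup Λ_k = h_k, tolerances ε_k ≤ h_k²·M(s_{k+1})/2, and starting point f_0 = 0, where s_k = Σ_{i=0}^{k−1} h_i. Then for every reference function f̄ ∈ span(S) and every k ≥ 1, ΔA(f_k) ≤ (‖f̄‖₁/(s_k + ‖f̄‖₁))·ΔA(f_0) + inf_{1≤ℓ≤k} [ (ℓ·(s_ℓ + ‖f̄‖₁)/(s_k + ‖f̄‖₁))·h_0² + (k − ℓ)·h_ℓ² ]·M(s_{k+1}), where ΔA(f) = max(0, A(f) − A(f̄)). -/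

import Mathlib

/-!
Write `Δ k = max 0 (A (f k) - A fbar)`, `n = ‖fbar‖₁` and `e k = (h k)² M (s (k+1)) / 2 + ε k`.
A second-order Taylor bound in the directions `± b`, compared with the greedy choice, bounds
`h k * |∇A (f k) b|` uniformly in `b ∈ S`. A linear functional bounded on `S` is bounded by the
1-norm on `span S`, so convexity, applied at `f k` in the direction `fbar - f k`, gives
`h k * (A (f k) - A fbar) ≤ (s k + n) * (A (f k) - A (f (k+1)) + e k)`.
Since `s (k+1) = s k + h k`, this says that `(s k + n) * Δ k` grows by at most
`(s (k+1) + n) * e k` in one step. The sum of these errors is split at `ℓ`, with `h j ≤ h 0` before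
`ℓ` and `h j ≤ h ℓ` from `ℓ` on.
-/

open Filter Finset Set

variable {V : Type*} [AddCommGroup V] [Module ℝ V]

/-- The 1-norm `‖f‖₁` of `f` with respect to the basis set `S`: the infimum of `∑ |wʲ|`
over all representations `f = ∑ wʲ fʲ` with `fʲ ∈ S`. -/
noncomputable def norm1 (S : Set V) (f : V) : ℝ :=
  sInf {c : ℝ | ∃ (n : ℕ) (w : Fin n → ℝ) (g : Fin n → V),
    (∀ i, g i ∈ S) ∧ f = ∑ i, w i • g i ∧ c = ∑ i, |w i|}

/-- Assumption 3.1: `A` is convex on `span S`, differentiable with gradient `∇A` (a linear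
functional), and for `f ∈ span S`, `g ∈ S` the function `h ↦ A (f + h g)` is twice
differentiable with second derivative at `0` bounded by `M (‖f‖₁)`, `M` nondecreasing. -/
structure Assumption31 (S : Set V) (A : V → ℝ) (M : ℝ → ℝ) : Prop where
  convexOn : ConvexOn ℝ (Submodule.span ℝ S : Set V) A
  differentiable : ∃ G : V → V →ₗ[ℝ] ℝ, ∀ f ∈ Submodule.span ℝ S, ∀ g ∈ Submodule.span ℝ S,
    Filter.Tendsto (fun h : ℝ => (A (f + h • g) - A f) / h)
      (nhdsWithin (0 : ℝ) {(0 : ℝ)}ᶜ) (nhds (G f g))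
  mono : Monotone M
  secondDeriv : ∀ f ∈ Submodule.span ℝ S, ∀ g ∈ S, ∃ d1 d2 : ℝ → ℝ,
    (∀ h : ℝ, HasDerivAt (fun t : ℝ => A (f + t • g)) (d1 h) h) ∧
    (∀ h : ℝ, HasDerivAt d1 (d2 h) h) ∧ d2 0 ≤ M (norm1 S f)

/-- Algorithm 2.1 (greedy boosting): `f 0 ∈ span S`; at step `k`, `Λ k` is a closed symmetric
subset of `ℝ` containing `0`, `α k ∈ Λ k`, `g k ∈ S`, `f (k+1) = f k + α k • g k`, and
`(α k, g k)` approximately minimizes `A (f k + a • b)` over `a ∈ Λ k`, `b ∈ S` up to `ε k ≥ 0`. -/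
structure GreedyBoosting (S : Set V) (A : V → ℝ) (f : ℕ → V) (α : ℕ → ℝ) (g : ℕ → V)
    (Λ : ℕ → Set ℝ) (ε : ℕ → ℝ) : Prop where
  init_mem : f 0 ∈ Submodule.span ℝ S
  lambda_closed : ∀ k, IsClosed (Λ k)
  lambda_zero : ∀ k, (0 : ℝ) ∈ Λ k
  lambda_symm : ∀ k, ∀ a ∈ Λ k, -a ∈ Λ k
  eps_nonneg : ∀ k, 0 ≤ ε k
  alpha_mem : ∀ k, α k ∈ Λ k
  g_mem : ∀ k, g k ∈ S
  step : ∀ k, f (k + 1) = f k + α k • g k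
  approx_min : ∀ k, ∀ a ∈ Λ k, ∀ b ∈ S, A (f (k + 1)) ≤ A (f k + a • b) + ε k

section Norm1

variable {S : Set V} {f f' b : V}

lemma norm1_nonneg (S : Set V) (f : V) : 0 ≤ norm1 S f := by
  refine Real.sInf_nonneg ?_
  rintro _ ⟨n, w, g, -, -, rfl⟩
  exact Finset.sum_nonneg fun i _ => abs_nonneg (w i)

lemma norm1_sum_smul_le {ι : Type*} [Fintype ι] (w : ι → ℝ) {g : ι → V} (hg : ∀ i, g i ∈ S) :
    norm1 S (∑ i, w i • g i) ≤ ∑ i, |w i| := by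
  let e := (Fintype.equivFin ι).symm
  refine csInf_le ⟨0, ?_⟩ ⟨Fintype.card ι, w ∘ e, g ∘ e, fun i => hg (e i),
    (e.sum_comp fun i => w i • g i).symm, (e.sum_comp fun i => |w i|).symm⟩
  rintro _ ⟨n, w, g, -, -, rfl⟩
  exact Finset.sum_nonneg fun i _ => abs_nonneg (w i)

lemma le_norm1_mul {r E : ℝ} (hf : f ∈ Submodule.span ℝ S) (hE : 0 ≤ E)
    (hr : ∀ (n : ℕ) (w : Fin n → ℝ) (g : Fin n → V), (∀ i, g i ∈ S) → f = ∑ i, w i • g i →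
      r ≤ (∑ i, |w i|) * E) : r ≤ norm1 S f * E := by
  obtain ⟨n, w, g, hwg⟩ := Submodule.mem_span_set'.1 hf
  rw [norm1, sInf_eq_iInf', Real.iInf_mul_of_nonneg hE]
  have : Nonempty {c : ℝ | ∃ (n : ℕ) (w : Fin n → ℝ) (g : Fin n → V),
      (∀ i, g i ∈ S) ∧ f = ∑ i, w i • g i ∧ c = ∑ i, |w i|} :=
    ⟨_, n, w, fun i => g i, fun i => (g i).2, hwg.symm, rfl⟩
  refine le_ciInf ?_
  rintro ⟨_, n, w, g, hg, hfg, rfl⟩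
  exact hr n w g hg hfg

lemma le_norm1 {r : ℝ} (hf : f ∈ Submodule.span ℝ S)
    (hr : ∀ (n : ℕ) (w : Fin n → ℝ) (g : Fin n → V), (∀ i, g i ∈ S) → f = ∑ i, w i • g i →
      r ≤ ∑ i, |w i|) : r ≤ norm1 S f := by
  simpa only [mul_one] using le_norm1_mul (E := 1) hf zero_le_one (by simpa only [mul_one] using hr)

lemma norm1_zero (S : Set V) : norm1 S (0 : V) = 0 :=
  (norm1_nonneg S 0).antisymm' <| by
    simpa using norm1_sum_smul_le (S := S) (g := Fin.elim0) Fin.elim0 fun i => i.elim0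

lemma norm1_smul_le (hb : b ∈ S) (t : ℝ) : norm1 S (t • b) ≤ |t| := by
  simpa using norm1_sum_smul_le (fun _ : Unit => t) fun _ => hb

lemma norm1_add_le (hf : f ∈ Submodule.span ℝ S) (hf' : f' ∈ Submodule.span ℝ S) :
    norm1 S (f + f') ≤ norm1 S f + norm1 S f' := by
  rw [← sub_le_iff_le_add]
  refine le_norm1 hf fun n w g hg hfg => ?_
  rw [sub_le_comm]
  refine le_norm1 hf' fun n' w' g' hg' hfg' => ?_
  rw [sub_le_iff_le_add', hfg, hfg']
  simpa using norm1_sum_smul_le (S := S) (Sum.elim w w') (g := Sum.elim g g') (by simp [hg, hg'])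

lemma norm1_add_smul_le (hf : f ∈ Submodule.span ℝ S) (hb : b ∈ S) (t : ℝ) :
    norm1 S (f + t • b) ≤ norm1 S f + |t| :=
  (norm1_add_le hf (Submodule.smul_mem _ t (Submodule.subset_span hb))).trans
    (add_le_add_right (norm1_smul_le hb t) _)

lemma abs_apply_le_norm1_mul {E : ℝ} (L : V →ₗ[ℝ] ℝ) (hE : 0 ≤ E) (hL : ∀ b ∈ S, |L b| ≤ E)
    (hf : f ∈ Submodule.span ℝ S) : |L f| ≤ norm1 S f * E := by
  refine le_norm1_mul hf hE ?_
  rintro n w g hg rfl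
  calc |L (∑ i, w i • g i)| = |∑ i, w i * L (g i)| := by simp only [map_sum, map_smul, smul_eq_mul]
    _ ≤ ∑ i, |w i * L (g i)| := Finset.abs_sum_le_sum_abs _ _
    _ ≤ ∑ i, |w i| * E := Finset.sum_le_sum fun i _ => by
        rw [abs_mul]; exact mul_le_mul_of_nonneg_left (hL _ (hg i)) (abs_nonneg _)
    _ = (∑ i, |w i|) * E := (Finset.sum_mul ..).symm

end Norm1

section Calculus

lemma le_sub_of_convexOn_of_hasLineDerivAt {s : Set V} {A : V → ℝ} {f u : V} {D : ℝ}
    (hA : ConvexOn ℝ s A) (hf : f ∈ s) (hu : u ∈ s) (hD : HasLineDerivAt ℝ A D f (u - f)) :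
    D ≤ A u - A f := by
  have hline : ⇑(AffineMap.lineMap (k := ℝ) f u) = fun t : ℝ => f + t • (u - f) := by
    ext t; simp [AffineMap.lineMap_apply, add_comm]
  have hslope := (hA.comp_affineMap (AffineMap.lineMap f u)).le_slope_of_hasDerivAt
    (x := 0) (y := 1) (f' := D) (by simpa using hf) (by simpa using hu) one_pos
    (by rw [hline]; exact hD)
  simpa [slope_def_field] using hslope

lemma le_taylor_of_deriv2_le {φ φ' φ'' : ℝ → ℝ} {a b C : ℝ}
    (hφ : ∀ t ∈ uIcc a b, HasDerivAt φ (φ' t) t) (hφ' : ∀ t ∈ uIcc a b, HasDerivAt φ' (φ'' t) t)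
    (hC : ∀ t ∈ uIcc a b, φ'' t ≤ C) : φ b ≤ φ a + φ' a * (b - a) + C / 2 * (b - a) ^ 2 := by
  -- The tangent line inequality for the convex function `C / 2 * t ^ 2 - φ t` covers `a ≤ b` and
  -- `b ≤ a` at once.
  have hψ : ∀ t ∈ uIcc a b, HasDerivAt (fun t => C / 2 * t ^ 2 - φ t) (C * t - φ' t) t :=
    fun t ht => (((hasDerivAt_pow 2 t).const_mul (C / 2)).fun_sub (hφ t ht)).congr_deriv
      (by push_cast; ring)
  have hψ' : ∀ t ∈ uIcc a b, HasDerivAt (fun t => C * t - φ' t) (C - φ'' t) t :=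
    fun t ht => (((hasDerivAt_id t).const_mul C).fun_sub (hφ' t ht)).congr_deriv (by ring)
  have hconv : ConvexOn ℝ (uIcc a b) fun t => C / 2 * t ^ 2 - φ t :=
    convexOn_of_hasDerivWithinAt2_nonneg (convex_uIcc a b)
      (fun t ht => (hψ t ht).continuousAt.continuousWithinAt)
      (fun t ht => (hψ t (interior_subset ht)).hasDerivWithinAt)
      (fun t ht => (hψ' t (interior_subset ht)).hasDerivWithinAt)
      fun t ht => sub_nonneg.2 (hC t (interior_subset ht))
  have htangent := le_sub_of_convexOn_of_hasLineDerivAt hconv left_mem_uIcc right_mem_uIcc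
    ((hψ a left_mem_uIcc).hasFDerivAt.hasLineDerivAt (b - a))
  simp only [ContinuousLinearMap.toSpanSingleton_apply, smul_eq_mul] at htangent
  linarith

end Calculus

namespace Assumption31

variable {S : Set V} {A : V → ℝ} {M : ℝ → ℝ} {f fbar b : V} {D H r σ : ℝ}

lemma exists_gradient (hA : Assumption31 S A M) :
    ∃ G : V → V →ₗ[ℝ] ℝ, ∀ f ∈ Submodule.span ℝ S, ∀ g ∈ Submodule.span ℝ S,
      HasLineDerivAt ℝ A (G f g) f g := by
  obtain ⟨G, hG⟩ := hA.differentiable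
  refine ⟨G, fun f hf g hg => hasLineDerivAt_iff_tendsto_slope_zero.2 ?_⟩
  simpa only [div_eq_inv_mul, smul_eq_mul] using hG f hf g hg

lemma exists_deriv2_le (hA : Assumption31 S A M) (hf : f ∈ Submodule.span ℝ S) (hb : b ∈ S) :
    ∃ φ' φ'' : ℝ → ℝ, (∀ t, HasDerivAt (fun t : ℝ => A (f + t • b)) (φ' t) t) ∧
      (∀ t, HasDerivAt φ' (φ'' t) t) ∧ ∀ t, φ'' t ≤ M (norm1 S (f + t • b)) := by
  obtain ⟨φ', φ'', hφ, hφ', -⟩ := hA.secondDeriv f hf b hb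
  refine ⟨φ', φ'', hφ, hφ', fun t => ?_⟩
  have hft : f + t • b ∈ Submodule.span ℝ S :=
    add_mem hf (Submodule.smul_mem _ t (Submodule.subset_span hb))
  obtain ⟨ψ', ψ'', hψ, hψ', hψ''⟩ := hA.secondDeriv (f + t • b) hft b hb
  have hψ'_eq : ψ' = fun r => φ' (t + r) := funext fun r => by
    refine (hψ r).unique ?_
    simpa only [add_smul, add_assoc] using (hφ (t + r)).comp_const_add t r
  have hψ''_eq : ψ'' 0 = φ'' t := by
    refine (hψ' 0).unique ?_
    rw [hψ'_eq]
    simpa only [add_zero] using (hφ' (t + 0)).comp_const_add t 0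
  exact hψ''_eq ▸ hψ''

lemma bound_nonneg (hA : Assumption31 S A M) (hS : S.Nonempty) {c : ℝ} (hc : 0 ≤ c) : 0 ≤ M c := by
  obtain ⟨b, hb⟩ := hS
  obtain ⟨φ', φ'', hφ, hφ', hφ''⟩ := hA.exists_deriv2_le (zero_mem _) hb
  have hconv : ConvexOn ℝ univ fun t : ℝ => A (0 + t • b) := by
    have hline := (hA.convexOn.comp_linearMap (LinearMap.toSpanSingleton ℝ V b)).subset
      (fun t _ => Submodule.smul_mem _ t (Submodule.subset_span hb)) convex_univ
    simp only [zero_add]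
    exact hline
  have hmono : Monotone φ' := by
    have hderiv : deriv (fun t : ℝ => A (0 + t • b)) = φ' := funext fun t => (hφ t).deriv
    simpa only [hderiv, monotoneOn_univ] using
      hconv.monotoneOn_deriv fun t _ => (hφ t).differentiableAt
  calc 0 ≤ φ'' 0 := (hφ' 0).nonneg_of_monotone hmono
    _ ≤ M (norm1 S (0 + (0 : ℝ) • b)) := hφ'' 0
    _ ≤ M c := hA.mono (by simpa only [zero_smul, add_zero, norm1_zero] using hc)

lemma le_quadratic (hA : Assumption31 S A M) (hf : f ∈ Submodule.span ℝ S) (hb : b ∈ S)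
    (hD : HasLineDerivAt ℝ A D f b) (t : ℝ) :
    A (f + t • b) ≤ A f + D * t + M (norm1 S f + |t|) / 2 * t ^ 2 := by
  obtain ⟨φ', φ'', hφ, hφ', hφ''⟩ := hA.exists_deriv2_le hf hb
  have hφ'_zero : φ' 0 = D := (hφ 0).unique hD
  have hφ''_le : ∀ r ∈ uIcc 0 t, φ'' r ≤ M (norm1 S f + |t|) := fun r hr => by
    have hrt : |r| ≤ |t| := by simpa only [sub_zero] using abs_sub_left_of_mem_uIcc hr
    exact (hφ'' r).trans (hA.mono ((norm1_add_smul_le hf hb r).trans (add_le_add_right hrt _)))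
  simpa [hφ'_zero] using
    le_taylor_of_deriv2_le (fun r _ => hφ r) (fun r _ => hφ' r) hφ''_le

lemma mul_abs_lineDeriv_le (hA : Assumption31 S A M) (hf : f ∈ Submodule.span ℝ S)
    (hσ : norm1 S f ≤ σ) (hb : b ∈ S) (hD : HasLineDerivAt ℝ A D f b) (hH : 0 ≤ H)
    (hr : ∀ t : ℝ, |t| = H → r ≤ A (f + t • b)) :
    H * |D| ≤ A f - r + M (σ + H) / 2 * H ^ 2 := by
  have hM : M (norm1 S f + H) / 2 * H ^ 2 ≤ M (σ + H) / 2 * H ^ 2 := by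
    gcongr
    exact hA.mono (by gcongr)
  have habs : |H| = H := abs_of_nonneg hH
  have hpos := (hr H habs).trans (hA.le_quadratic hf hb hD H)
  have hneg := (hr (-H) (by rw [abs_neg, habs])).trans (hA.le_quadratic hf hb hD (-H))
  rw [abs_neg, neg_sq] at hneg
  rw [habs] at hpos hneg
  calc H * |D| = |H * D| := by rw [abs_mul, habs]
    _ ≤ A f - r + M (σ + H) / 2 * H ^ 2 := abs_le.2 ⟨by linarith, by linarith⟩

lemma mul_sub_le_add_norm1_mul (hA : Assumption31 S A M) (hS : S.Nonempty)
    (hf : f ∈ Submodule.span ℝ S) (hfbar : fbar ∈ Submodule.span ℝ S) (hσ : norm1 S f ≤ σ)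
    (hH : 0 ≤ H) (hr : ∀ b ∈ S, ∀ t : ℝ, |t| = H → r ≤ A (f + t • b)) :
    H * (A f - A fbar) ≤ (σ + norm1 S fbar) * (A f - r + M (σ + H) / 2 * H ^ 2) := by
  set E := A f - r + M (σ + H) / 2 * H ^ 2
  obtain ⟨G, hG⟩ := hA.exists_gradient
  have hGE : ∀ b ∈ S, |(H • G f) b| ≤ E := fun b hb => by
    rw [LinearMap.smul_apply, smul_eq_mul, abs_mul, abs_of_nonneg hH]
    exact hA.mul_abs_lineDeriv_le hf hσ hb (hG f hf b (Submodule.subset_span hb)) hH (hr b hb)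
  have hE : 0 ≤ E := (abs_nonneg _).trans (hGE _ hS.some_mem)
  have htangent : G f (fbar - f) ≤ A fbar - A f :=
    le_sub_of_convexOn_of_hasLineDerivAt hA.convexOn hf hfbar (hG f hf _ (sub_mem hfbar hf))
  calc H * (A f - A fbar) ≤ H * -G f (fbar - f) := by gcongr; linarith
    _ = (H • G f) f - (H • G f) fbar := by
        simp only [map_sub, LinearMap.smul_apply, smul_eq_mul]; ring
    _ ≤ norm1 S f * E + norm1 S fbar * E :=
        (sub_eq_add_neg _ _).trans_le <| add_le_add
          (le_of_abs_le (abs_apply_le_norm1_mul _ hE hGE hf))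
          (neg_le.1 (neg_le_of_abs_le (abs_apply_le_norm1_mul _ hE hGE hfbar)))
    _ ≤ (σ + norm1 S fbar) * E := by rw [← add_mul]; gcongr

end Assumption31

lemma add_mul_max_zero_le {a H D D' Q : ℝ} (ha : 0 ≤ a) (hH : 0 ≤ H) (hQ : 0 ≤ Q)
    (hD' : D' ≤ D + Q) (hD : H * D ≤ a * (D - D' + Q)) :
    (a + H) * max 0 D' ≤ a * max 0 D + (a + H) * Q := by
  rw [mul_max_of_nonneg _ _ (add_nonneg ha hH), mul_zero]
  refine max_le (by positivity) ?_
  have hmax : a * D ≤ a * max 0 D := by gcongr; exact le_max_right 0 D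
  have hHE : 0 ≤ H * (D - D' + Q) := mul_nonneg hH (by linarith)
  linarith

lemma sum_mul_sq_le_of_antitone {a h : ℕ → ℝ} (ha : Monotone a) (ha0 : 0 ≤ a 0) (hh : Antitone h)
    (hh0 : ∀ j, 0 ≤ h j) {k ℓ : ℕ} (hℓk : ℓ ≤ k) :
    ∑ j ∈ Finset.range k, a (j + 1) * h j ^ 2 ≤
      ℓ * (a ℓ * h 0 ^ 2) + ((k : ℝ) - ℓ) * (a k * h ℓ ^ 2) := by
  have hterm : ∀ {i j m}, i ≤ j → j < m → a (j + 1) * h j ^ 2 ≤ a m * h i ^ 2 :=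
    fun {i j m} hij hjm => mul_le_mul (ha hjm) (pow_le_pow_left₀ (hh0 j) (hh hij) 2)
      (sq_nonneg _) (ha0.trans (ha (Nat.zero_le m)))
  rw [← Finset.sum_range_add_sum_Ico _ hℓk]
  apply add_le_add
  · simpa using Finset.sum_le_card_nsmul (Finset.range ℓ) _ _ fun j hj =>
      hterm (Nat.zero_le j) (Finset.mem_range.1 hj)
  · simpa [Nat.cast_sub hℓk] using Finset.sum_le_card_nsmul (Finset.Ico ℓ k) _ _ fun j hj =>
      hterm (Finset.mem_Ico.1 hj).1 (Finset.mem_Ico.1 hj).2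

/-- The suboptimality `ΔA f` of `f` with respect to the reference function `fbar`, truncated below
at zero; the greedy convergence bounds are bounds on it. -/
def excess (A : V → ℝ) (fbar f : V) : ℝ :=
  max 0 (A f - A fbar)

namespace GreedyBoosting

variable {S : Set V} {A : V → ℝ} {M : ℝ → ℝ} {f : ℕ → V} {α : ℕ → ℝ} {g : ℕ → V} {Λ : ℕ → Set ℝ}
  {ε h s : ℕ → ℝ} {fbar : V}

lemma mem_span (hboost : GreedyBoosting S A f α g Λ ε) (k : ℕ) : f k ∈ Submodule.span ℝ S := by
  induction k with
  | zero => exact hboost.init_mem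
  | succ k ih =>
    rw [hboost.step]
    exact add_mem ih (Submodule.smul_mem _ _ (Submodule.subset_span (hboost.g_mem k)))

lemma apply_succ_le (hboost : GreedyBoosting S A f α g Λ ε) (k : ℕ) :
    A (f (k + 1)) ≤ A (f k) + ε k := by
  simpa only [zero_smul, add_zero] using
    hboost.approx_min k 0 (hboost.lambda_zero k) (g k) (hboost.g_mem k)

lemma stepSize_nonneg (hboost : GreedyBoosting S A f α g Λ ε) (hΛ : ∀ k, IsLUB (Λ k) (h k))
    (k : ℕ) : 0 ≤ h k :=
  (hΛ k).1 (hboost.lambda_zero k)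

lemma mem_lambda_of_abs_eq (hboost : GreedyBoosting S A f α g Λ ε) (hΛ : ∀ k, IsLUB (Λ k) (h k))
    {k : ℕ} {t : ℝ} (ht : |t| = h k) : t ∈ Λ k := by
  have hmem : h k ∈ Λ k :=
    (hΛ k).mem_of_isClosed ⟨0, hboost.lambda_zero k⟩ (hboost.lambda_closed k)
  rcases eq_or_eq_neg_of_abs_eq ht with rfl | rfl
  · exact hmem
  · exact hboost.lambda_symm k _ hmem

lemma norm1_le (hboost : GreedyBoosting S A f α g Λ ε) (hΛ : ∀ k, IsLUB (Λ k) (h k))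
    (hs0 : norm1 S (f 0) ≤ s 0) (hs : ∀ k, s (k + 1) = s k + h k) (k : ℕ) :
    norm1 S (f k) ≤ s k := by
  induction k with
  | zero => exact hs0
  | succ k ih =>
    have hα : |α k| ≤ h k := abs_le'.2 ⟨(hΛ k).1 (hboost.alpha_mem k),
      (hΛ k).1 (hboost.lambda_symm k _ (hboost.alpha_mem k))⟩
    rw [hboost.step, hs]
    exact (norm1_add_smul_le (hboost.mem_span k) (hboost.g_mem k) (α k)).trans (add_le_add ih hα)

lemma mul_excess_succ_le (hA : Assumption31 S A M) (hboost : GreedyBoosting S A f α g Λ ε)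
    (hΛ : ∀ k, IsLUB (Λ k) (h k)) (hs0 : norm1 S (f 0) ≤ s 0) (hs : ∀ k, s (k + 1) = s k + h k)
    (hfbar : fbar ∈ Submodule.span ℝ S) (k : ℕ) :
    (s (k + 1) + norm1 S fbar) * excess A fbar (f (k + 1)) ≤
      (s k + norm1 S fbar) * excess A fbar (f k) +
        (s (k + 1) + norm1 S fbar) * (M (s (k + 1)) / 2 * h k ^ 2 + ε k) := by
  have hS : S.Nonempty := ⟨g k, hboost.g_mem k⟩
  have hh : 0 ≤ h k := hboost.stepSize_nonneg hΛ k
  have hsk : norm1 S (f k) ≤ s k := hboost.norm1_le hΛ hs0 hs k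
  have hsk0 : 0 ≤ s k := (norm1_nonneg S (f k)).trans hsk
  have hM : 0 ≤ M (s k + h k) := hA.bound_nonneg hS (add_nonneg hsk0 hh)
  have hcurv : 0 ≤ M (s k + h k) / 2 * h k ^ 2 := by positivity
  have hgreedy := hA.mul_sub_le_add_norm1_mul hS (hboost.mem_span k) hfbar hsk hh
    (r := A (f (k + 1)) - ε k) fun b hb t ht => sub_le_iff_le_add.2
      (hboost.approx_min k t (hboost.mem_lambda_of_abs_eq hΛ ht) b hb)
  have hdescent := hboost.apply_succ_le k
  rw [hs, add_right_comm, excess, excess]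
  exact add_mul_max_zero_le (add_nonneg hsk0 (norm1_nonneg S fbar)) hh
    (add_nonneg hcurv (hboost.eps_nonneg k)) (by linarith) (hgreedy.trans_eq (by ring))

theorem mul_excess_le_sum (hA : Assumption31 S A M) (hboost : GreedyBoosting S A f α g Λ ε)
    (hΛ : ∀ k, IsLUB (Λ k) (h k)) (hs0 : norm1 S (f 0) ≤ s 0) (hs : ∀ k, s (k + 1) = s k + h k)
    (hfbar : fbar ∈ Submodule.span ℝ S) (k : ℕ) :
    (s k + norm1 S fbar) * excess A fbar (f k) ≤
      (s 0 + norm1 S fbar) * excess A fbar (f 0) +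
        ∑ j ∈ Finset.range k,
          (s (j + 1) + norm1 S fbar) * (M (s (j + 1)) / 2 * h j ^ 2 + ε j) := by
  induction k with
  | zero => simp
  | succ k ih =>
    rw [Finset.sum_range_succ]
    linarith [mul_excess_succ_le hA hboost hΛ hs0 hs hfbar k]

lemma sum_error_le (hA : Assumption31 S A M) (hboost : GreedyBoosting S A f α g Λ ε)
    (hΛ : ∀ k, IsLUB (Λ k) (h k)) (hmono : Antitone h) (hs0 : 0 ≤ s 0)
    (hs : ∀ k, s (k + 1) = s k + h k) (hε : ∀ k, ε k ≤ h k ^ 2 * M (s (k + 1)) / 2)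
    {n : ℝ} (hn : 0 ≤ n) {k ℓ : ℕ} (hℓk : ℓ ≤ k) :
    ∑ j ∈ Finset.range k, (s (j + 1) + n) * (M (s (j + 1)) / 2 * h j ^ 2 + ε j) ≤
      (ℓ * ((s ℓ + n) * h 0 ^ 2) + ((k : ℝ) - ℓ) * ((s k + n) * h ℓ ^ 2)) * M (s (k + 1)) := by
  have hh := hboost.stepSize_nonneg hΛ
  have hs_mono : Monotone s := monotone_nat_of_le_succ fun j => by
    rw [hs]; exact le_add_of_nonneg_right (hh j)
  have hs_nonneg : ∀ j, 0 ≤ s j := fun j => hs0.trans (hs_mono (Nat.zero_le j))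
  have hM : 0 ≤ M (s (k + 1)) := hA.bound_nonneg ⟨g 0, hboost.g_mem 0⟩ (hs_nonneg _)
  calc ∑ j ∈ Finset.range k, (s (j + 1) + n) * (M (s (j + 1)) / 2 * h j ^ 2 + ε j)
      ≤ ∑ j ∈ Finset.range k, (s (j + 1) + n) * (h j ^ 2 * M (s (k + 1))) := by
        refine Finset.sum_le_sum fun j hj => mul_le_mul_of_nonneg_left ?_
          (add_nonneg (hs_nonneg _) hn)
        have hMj : M (s (j + 1)) ≤ M (s (k + 1)) :=
          hA.mono (hs_mono (Nat.succ_le_succ (Finset.mem_range.1 hj).le))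
        linarith [hε j, mul_le_mul_of_nonneg_left hMj (sq_nonneg (h j))]
    _ = (∑ j ∈ Finset.range k, (s (j + 1) + n) * h j ^ 2) * M (s (k + 1)) := by
        simp only [Finset.sum_mul, mul_assoc]
    _ ≤ _ := mul_le_mul_of_nonneg_right (sum_mul_sq_le_of_antitone (a := fun j => s j + n)
        (hs_mono.add_const n) (add_nonneg hs0 hn) hmono hh hℓk) hM

end GreedyBoosting

theorem corollary_4_3_general {S : Set V} {A : V → ℝ} {M : ℝ → ℝ} (hA : Assumption31 S A M)
    {h : ℕ → ℝ} (hmono : Antitone h) {f : ℕ → V} {α : ℕ → ℝ} {g : ℕ → V} {Λ : ℕ → Set ℝ}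
    {ε : ℕ → ℝ} (hboost : GreedyBoosting S A f α g Λ ε) (hΛ : ∀ k, IsLUB (Λ k) (h k))
    {s : ℕ → ℝ} (hs0 : norm1 S (f 0) ≤ s 0) (hs : ∀ k, s (k + 1) = s k + h k)
    (hε : ∀ k, ε k ≤ h k ^ 2 * M (s (k + 1)) / 2)
    {fbar : V} (hfbar : fbar ∈ Submodule.span ℝ S)
    {k ℓ : ℕ} (hℓk : ℓ ≤ k) (hpos : 0 < s k + norm1 S fbar) :
    excess A fbar (f k) ≤
      (s 0 + norm1 S fbar) / (s k + norm1 S fbar) * excess A fbar (f 0)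
        + ((ℓ : ℝ) * (s ℓ + norm1 S fbar) / (s k + norm1 S fbar) * h 0 ^ 2
            + ((k : ℝ) - (ℓ : ℝ)) * h ℓ ^ 2) * M (s (k + 1)) := by
  have herror := hboost.sum_error_le hA hΛ hmono ((norm1_nonneg S (f 0)).trans hs0) hs hε
    (norm1_nonneg S fbar) hℓk
  refine le_of_mul_le_mul_left ((hboost.mul_excess_le_sum hA hΛ hs0 hs hfbar k).trans ?_) hpos
  refine (add_le_add_right herror _).trans_eq ?_
  field_simp

/-- Corollary 4.3: with a nonincreasing positive step-size sequence `h`, `sup (Λ k) = h k`,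
`ε k ≤ (h k)² M (s (k+1))/2` and `f 0 = 0`, for every reference function `f̄ ∈ span S`,
every `k ≥ 1` and every `1 ≤ ℓ ≤ k` (so that the stated bound holds with the infimum over
`ℓ`), `ΔA (f k) ≤ (‖f̄‖₁/(s k + ‖f̄‖₁)) ΔA (f 0)
  + [ (ℓ (s ℓ + ‖f̄‖₁)/(s k + ‖f̄‖₁)) h 0² + (k - ℓ) (h ℓ)² ] M (s (k+1))`. -/
theorem corollary_4_3 (S : Set V) (A : V → ℝ) (M : ℝ → ℝ)
    (hA : Assumption31 S A M)
    (h : ℕ → ℝ) (hpos : ∀ j, 0 < h j) (hmono : Antitone h)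
    (s : ℕ → ℝ) (hs : ∀ k, s k = ∑ i ∈ Finset.range k, h i)
    (f : ℕ → V) (α : ℕ → ℝ) (g : ℕ → V) (Λ : ℕ → Set ℝ) (ε : ℕ → ℝ)
    (hboost : GreedyBoosting S A f α g Λ ε)
    (hΛ : ∀ k, IsLUB (Λ k) (h k))
    (hε : ∀ k, ε k ≤ h k ^ 2 * M (s (k + 1)) / 2)
    (hf0 : f 0 = 0)
    (fbar : V) (hfbar : fbar ∈ Submodule.span ℝ S)
    (k ℓ : ℕ) (hℓ1 : 1 ≤ ℓ) (hℓk : ℓ ≤ k) :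
    max 0 (A (f k) - A fbar) ≤
      norm1 S fbar / (s k + norm1 S fbar) * max 0 (A (f 0) - A fbar)
        + ((ℓ : ℝ) * (s ℓ + norm1 S fbar) / (s k + norm1 S fbar) * h 0 ^ 2
            + ((k : ℝ) - (ℓ : ℝ)) * h ℓ ^ 2) * M (s (k + 1)) := by
  have hs0 : s 0 = 0 := by simp [hs]
  have hspos : 0 < s k := hs k ▸ Finset.sum_pos (fun j _ => hpos j)
    (Finset.nonempty_range_iff.2 (Nat.one_le_iff_ne_zero.1 (hℓ1.trans hℓk)))
  simpa only [excess, hs0, zero_add] using corollary_4_3_general hA hmono hboost hΛ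
    (by rw [hf0, norm1_zero, hs0]) (fun j => by rw [hs, hs, Finset.sum_range_succ]) hε hfbar hℓk
    (add_pos_of_pos_of_nonneg hspos (norm1_nonneg S fbar))
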